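/- The analytic continuation of A to a slit disk at u_c satisfies, as u → u_c within the slit disk, A(u) = Â(1) + b·(1 − u/u_c)^{1/3} + O((1 − u/u_c)^{2/3}), where b = −(27/20)·(3/2)^{2/3} and the fractional powers are taken with the principal branch. -/

import Mathlib

noncomputable def nuc : ℝ := 1 + 2 * Real.sqrt 7

noncomputable def tc : ℝ := Real.sqrt 10 / (8 * (7 + Real.sqrt 7) ^ ((3:ℝ)/2))

noncomputable def uc : ℝ := (6/5) * (7 + Real.sqrt 7) * tc

/-- The rational parametrization `û` of the `u`-variable. -/
noncomputable def uhat (H : ℂ) : ℂ :=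
  ((uc : ℂ) / 3) * H * (10 - 12 * H + 6 * H ^ 2 - H ^ 3)

/-- The rational parametrization `Ẑ₀`. -/
noncomputable def Z0hat (H : ℂ) : ℂ :=
  (1/10) * (1 - (1 - (Real.sqrt 7 : ℂ)) * H + 3 * H ^ 2 - H ^ 3)
    * (10 - 12 * H + 6 * H ^ 2 - H ^ 3)

/-- The rational parametrization `Ẑ₁`. -/
noncomputable def Z1hat (H : ℂ) : ℂ :=
  (3 / (10 * (uc : ℂ))) *
    ((Real.sqrt 7 : ℂ) - 1 + H - 3 * (4 - 3 * H + H ^ 2) / (10 - 12 * H + 6 * H ^ 2 - H ^ 3))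

/-- The rational parametrization `Â`. -/
noncomputable def Ahat (H : ℂ) : ℂ :=
  (1/10) * ((((3:ℝ)/2) ^ ((7:ℝ)/3) : ℝ) : ℂ) * (9 - 8 * H + 3 * H ^ 2) / (3 - 3 * H + H ^ 2) ^ 2

noncomputable def bconst : ℝ := -(27/20) * ((3:ℝ)/2) ^ ((2:ℝ)/3)

/-- The slit disk at `x > 0` of margin `ε > 0`. -/
def slitDisk (x ε : ℝ) : Set ℂ :=
  Metric.ball (0 : ℂ) (x + ε) \ (Complex.ofReal '' Set.Icc x (x + ε))

open Filter Topology Asymptotics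

/-- The cube root of `1 - û/u_c` as a function of `h = 1 - H`, analytic near `h = 0`. -/
noncomputable def cubeRootParam (h : ℂ) : ℂ := h * ((2 + h) / 3) ^ ((1 : ℂ) / 3)

theorem uc_pos : 0 < uc := by
  unfold uc tc
  positivity

theorem cpow_one_third_pow_three (z : ℂ) : (z ^ ((1 : ℂ) / 3)) ^ 3 = z := by
  rw [one_div]
  exact Complex.cpow_ofNat_inv_pow z 3

theorem cubeRootParam_pow_three (h : ℂ) : cubeRootParam h ^ 3 = h ^ 3 * (2 + h) / 3 := by
  rw [cubeRootParam, mul_pow, cpow_one_third_pow_three]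
  ring

theorem uhat_one_sub (h : ℂ) : uhat (1 - h) = uc * (1 - cubeRootParam h ^ 3) := by
  rw [cubeRootParam_pow_three, uhat]
  ring

theorem ofReal_pow_three_cpow_one_third {x : ℝ} (hx : 0 < x) :
    ((x : ℂ) ^ 3) ^ ((1 : ℂ) / 3) = x := by
  rw [one_div]
  have := Real.pi_pos
  apply Complex.pow_cpow_ofNat_inv <;> rw [Complex.arg_ofReal_of_nonneg hx.le]
  · exact neg_neg_of_pos (by positivity)
  · positivity

theorem exists_cubeRootParam_ofReal {x : ℝ} (hx : 0 < x) :
    ∃ y : ℝ, 0 < y ∧ cubeRootParam x = y := by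
  refine ⟨x * ((2 + x) / 3) ^ ((1 : ℝ) / 3), by positivity, ?_⟩
  rw [cubeRootParam, Complex.ofReal_mul, Complex.ofReal_cpow (by positivity)]
  push_cast
  rfl

theorem analyticAt_cubeRootParam : AnalyticAt ℂ cubeRootParam 0 := by
  unfold cubeRootParam
  refine analyticAt_id.mul (AnalyticAt.cpow (by fun_prop) analyticAt_const ?_)
  left
  norm_num

theorem hasDerivAt_cubeRootParam :
    HasDerivAt cubeRootParam ((2 / 3 : ℂ) ^ ((1 : ℂ) / 3)) 0 := by
  have hk : DifferentiableAt ℂ (fun h : ℂ => ((2 + h) / 3) ^ ((1 : ℂ) / 3)) 0 :=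
    (AnalyticAt.cpow (by fun_prop) analyticAt_const (by left; norm_num)).differentiableAt
  have := (hasDerivAt_id (0 : ℂ)).mul hk.hasDerivAt
  convert! this using 1
  simp

theorem two_thirds_cpow_ne_zero : (2 / 3 : ℂ) ^ ((1 : ℂ) / 3) ≠ 0 := by
  simp [Complex.cpow_eq_zero_iff]

/-- The derivative of `Â` at `1`. -/
theorem hasDerivAt_Ahat_one :
    HasDerivAt Ahat ((6 / 10) * ((((3 : ℝ) / 2) ^ ((7 : ℝ) / 3) : ℝ) : ℂ)) 1 := by
  have hN : HasDerivAt (fun H : ℂ => 9 - 8 * H + 3 * H ^ 2) (-2) 1 := by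
    have := (((hasDerivAt_id (1 : ℂ)).const_mul 8).const_sub 9).add
      (((hasDerivAt_id (1 : ℂ)).pow 2).const_mul 3)
    convert! this using 1
    norm_num
  have hQ : HasDerivAt (fun H : ℂ => (3 - 3 * H + H ^ 2) ^ 2) (-2) 1 := by
    have := ((((hasDerivAt_id (1 : ℂ)).const_mul 3).const_sub 3).add
      ((hasDerivAt_id (1 : ℂ)).pow 2)).pow 2
    convert! this using 1
    norm_num
  have := (hN.const_mul ((1 / 10) * ((((3 : ℝ) / 2) ^ ((7 : ℝ) / 3) : ℝ) : ℂ))).div hQ (by norm_num)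
  convert! this using 1
  norm_num
  ring

theorem bconst_mul_two_thirds_cpow :
    (bconst : ℂ) * (2 / 3 : ℂ) ^ ((1 : ℂ) / 3) =
      -((6 / 10) * ((((3 : ℝ) / 2) ^ ((7 : ℝ) / 3) : ℝ) : ℂ)) := by
  have hreal : bconst * (2 / 3 : ℝ) ^ ((1 : ℝ) / 3) =
      -((6 / 10) * ((3 : ℝ) / 2) ^ ((7 : ℝ) / 3)) := by
    have h1 : (2 / 3 : ℝ) ^ ((1 : ℝ) / 3) = (3 / 2 : ℝ) ^ (-((1 : ℝ) / 3)) := by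
      rw [Real.rpow_neg (by norm_num), ← Real.inv_rpow (by norm_num)]
      norm_num
    have h2 : (3 / 2 : ℝ) ^ ((7 : ℝ) / 3) = (3 / 2) ^ 2 * (3 / 2 : ℝ) ^ ((1 : ℝ) / 3) := by
      rw [← Real.rpow_natCast, ← Real.rpow_add (by norm_num)]
      norm_num
    have h3 : (3 / 2 : ℝ) ^ ((2 : ℝ) / 3) * (3 / 2 : ℝ) ^ (-((1 : ℝ) / 3)) =
        (3 / 2 : ℝ) ^ ((1 : ℝ) / 3) := by
      rw [← Real.rpow_add (by norm_num)]
      norm_num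
    rw [bconst, h1, h2, mul_assoc, h3]
    ring
  have hc : (2 / 3 : ℂ) ^ ((1 : ℂ) / 3) = (((2 / 3 : ℝ) ^ ((1 : ℝ) / 3) : ℝ) : ℂ) := by
    rw [Complex.ofReal_cpow (by norm_num)]
    push_cast
    rfl
  rw [hc, ← Complex.ofReal_mul, hreal]
  push_cast
  rfl

theorem analyticAt_Ahat {H : ℂ} (hH : 3 - 3 * H + H ^ 2 ≠ 0) : AnalyticAt ℂ Ahat H := by
  unfold Ahat
  refine AnalyticAt.div (by fun_prop) (by fun_prop) (pow_ne_zero 2 hH)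

theorem analyticAt_uhat (H : ℂ) : AnalyticAt ℂ uhat H := by
  unfold uhat
  fun_prop

/-- An analytic function vanishing to second order at `0` is `O(h²)`. -/
theorem AnalyticAt.isBigO_sq {f : ℂ → ℂ} (hf : AnalyticAt ℂ f 0) (h0 : f 0 = 0)
    (h1 : HasDerivAt f 0 0) : f =O[𝓝 0] fun h => h ^ 2 := by
  obtain ⟨p, hp⟩ := hf
  have hd := hp.has_fpower_series_dslope_fslope.differentiableAt.hasDerivAt.isBigO_sub
  have h2 := (isBigO_refl (fun h : ℂ => h) (𝓝 0)).mul hd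
  refine (h2.congr_left fun h => ?_).congr_right fun h => ?_
  · have := sub_smul_dslope f 0 h
    simp only [dslope_same, h1.deriv, sub_zero, h0, smul_eq_mul] at this ⊢
    exact this
  · ring

theorem isBigO_Ahat_one_sub :
    (fun h : ℂ => Ahat (1 - h) - (Ahat 1 + (bconst : ℂ) * cubeRootParam h)) =O[𝓝 0]
      fun h => cubeRootParam h ^ 2 := by
  have hrev : (fun h : ℂ => h) =O[𝓝 0] cubeRootParam := by
    have := hasDerivAt_cubeRootParam.isTheta_sub two_thirds_cpow_ne_zero |>.isBigO_symm
    simpa [Function.comp_def, show cubeRootParam 0 = 0 by simp [cubeRootParam]] using this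
  refine (AnalyticAt.isBigO_sq ?_ ?_ ?_).trans (hrev.pow 2)
  · refine AnalyticAt.sub ?_ (analyticAt_const.add (analyticAt_const.mul analyticAt_cubeRootParam))
    exact AnalyticAt.fun_comp (analyticAt_Ahat (by norm_num)) (by fun_prop)
  · simp [cubeRootParam]
  · have hA : HasDerivAt Ahat ((6 / 10) * ((((3 : ℝ) / 2) ^ ((7 : ℝ) / 3) : ℝ) : ℂ))
        ((1 : ℂ) - 0) := by simpa using hasDerivAt_Ahat_one
    have := (hA.comp_const_sub 1 0).sub
      ((hasDerivAt_cubeRootParam.const_mul (bconst : ℂ)).const_add (Ahat 1))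
    convert! this using 1
    rw [bconst_mul_two_thirds_cpow]
    ring

theorem mul_one_sub_mem_slitDisk {ε : ℝ} {w : ℂ} (hw : w ∈ Complex.slitPlane)
    (hnorm : ‖1 - w‖ * uc < uc + ε) : (uc : ℂ) * (1 - w) ∈ slitDisk uc ε := by
  have hc := uc_pos
  refine ⟨?_, ?_⟩
  · rw [mem_ball_zero_iff, norm_mul, Complex.norm_real, Real.norm_of_nonneg hc.le, mul_comm]
    exact hnorm
  · rintro ⟨x, hx, hxw⟩
    have hw' : w = ((1 - x / uc : ℝ) : ℂ) := by
      have : (uc : ℂ) ≠ 0 := by exact_mod_cast hc.ne'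
      push_cast
      rw [hxw]
      field_simp
      ring
    rw [hw', Complex.ofReal_mem_slitPlane, sub_pos, div_lt_one hc] at hw
    exact absurd hx.1 (not_le.mpr hw)

theorem one_sub_div_mem_slitPlane {ε : ℝ} {u : ℂ} (hu : u ∈ slitDisk uc ε) :
    1 - u / (uc : ℂ) ∈ Complex.slitPlane := by
  have hc := uc_pos
  have hc' : (uc : ℂ) ≠ 0 := by exact_mod_cast hc.ne'
  by_contra hw
  rw [Complex.mem_slitPlane_iff, not_or, not_lt, not_not] at hw
  obtain ⟨hre, him⟩ := hw
  rw [← Complex.ofReal_one, Complex.sub_re, Complex.div_ofReal_re, Complex.ofReal_re,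
    sub_nonpos, one_le_div hc] at hre
  rw [Complex.sub_im, Complex.div_ofReal_im, Complex.one_im, zero_sub, neg_eq_zero,
    div_eq_zero_iff, or_iff_left hc.ne'] at him
  have hmem := hu.1
  rw [mem_ball_zero_iff] at hmem
  exact hu.2 ⟨u.re, ⟨hre, ((Complex.re_le_norm u).trans_lt hmem).le⟩,
    Complex.ext (by simp) (by simp [him])⟩

theorem uhat_ofReal_mem_slitDisk {ε x : ℝ} (hε : 0 < ε) (hx0 : 0 ≤ x) (hx1 : x < 1) :
    uhat x ∈ slitDisk uc ε := by
  have hc := uc_pos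
  set w : ℝ := (1 - x) ^ 3 * (2 + (1 - x)) / 3 with hw
  have h1 : 0 < 1 - x := sub_pos.mpr hx1
  have hw0 : 0 < w := by positivity
  have hw1 : w ≤ 1 := by
    have : (1 - x) ^ 3 ≤ 1 := pow_le_one₀ h1.le (by linarith)
    have : (1 - x) ^ 3 * (2 + (1 - x)) ≤ 1 * 3 :=
      mul_le_mul this (by linarith) (by linarith) zero_le_one
    rw [hw]
    linarith
  have hu : uhat x = (uc : ℂ) * (1 - (w : ℂ)) := by
    rw [hw, uhat]
    push_cast
    ring
  rw [hu]
  refine mul_one_sub_mem_slitDisk (by simpa using hw0) ?_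
  rw [← Complex.ofReal_one, ← Complex.ofReal_sub, Complex.norm_real,
    Real.norm_of_nonneg (by linarith)]
  nlinarith

theorem three_sub_add_sq_ne_zero_of_real (x : ℝ) : (3 : ℂ) - 3 * x + x ^ 2 ≠ 0 := by
  have : 0 < 3 - 3 * x + x ^ 2 := by nlinarith [sq_nonneg (x - 3 / 2)]
  exact_mod_cast this.ne'

theorem three_sub_add_sq_ne_zero_of_norm_lt {h : ℂ} (hh : ‖h‖ < 1 / 2) :
    3 - 3 * (1 - h) + (1 - h) ^ 2 ≠ 0 := by
  intro h0
  have h1 : -1 = h + h ^ 2 := by linear_combination -h0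
  have h2 : ‖(-1 : ℂ)‖ ≤ ‖h‖ + ‖h‖ ^ 2 := by
    rw [h1, ← norm_pow]
    exact norm_add_le _ _
  rw [norm_neg, norm_one] at h2
  nlinarith [norm_nonneg h]

/-- A local inverse of `cubeRootParam` near `0`. -/
theorem exists_openPartialHomeomorph_cubeRootParam :
    ∃ e : OpenPartialHomeomorph ℂ ℂ, ⇑e = cubeRootParam ∧ (0 : ℂ) ∈ e.source := by
  have hs : HasStrictDerivAt cubeRootParam ((2 / 3 : ℂ) ^ ((1 : ℂ) / 3)) 0 := by
    have := analyticAt_cubeRootParam.hasStrictDerivAt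
    rwa [hasDerivAt_cubeRootParam.deriv] at this
  have hf := hs.hasStrictFDerivAt_equiv two_thirds_cpow_ne_zero
  exact ⟨hf.toOpenPartialHomeomorph cubeRootParam, hf.toOpenPartialHomeomorph_coe,
    hf.mem_toOpenPartialHomeomorph_source⟩

theorem norm_cpow_one_third (w : ℂ) : ‖w ^ ((1 : ℂ) / 3)‖ = ‖w‖ ^ ((1 : ℝ) / 3) := by
  rw [← Complex.norm_cpow_real]
  push_cast
  rfl

theorem isPreconnected_ball_inter_slitPlane {δ : ℝ} (hδ : 0 < δ) :
    IsPreconnected (Metric.ball (0 : ℂ) δ ∩ Complex.slitPlane) := by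
  have hmem : ((δ / 2 : ℝ) : ℂ) ∈ Metric.ball (0 : ℂ) δ := by
    rw [mem_ball_zero_iff, Complex.norm_real, Real.norm_of_nonneg (by positivity)]
    linarith
  have hs : StarConvex ℝ ((δ / 2 : ℝ) : ℂ) (Metric.ball (0 : ℂ) δ ∩ Complex.slitPlane) :=
    ((convex_ball 0 δ).starConvex hmem).inter
      (Complex.starConvex_ofReal_slitPlane (by positivity))
  exact (hs.isPathConnected
    ⟨hmem, Complex.ofReal_mem_slitPlane.mpr (by positivity)⟩).isConnected.isPreconnected

/-- Near `u_c`, the continuation `g` is `Â` composed with the branch of `û⁻¹` given by a local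
inverse of `cubeRootParam` evaluated at the principal cube root of `1 - u/u_c`. -/
theorem continuation_eq_Ahat_of_local_inverse {ρ ε : ℝ} (hρ : 0 < ρ) (hε : 0 < ε) {g : ℂ → ℂ}
    (hg_an : ∀ w ∈ slitDisk uc ε, AnalyticAt ℂ g w)
    (hg : ∀ H : ℂ, ‖H‖ < ρ → g (uhat H) = Ahat H)
    {e : OpenPartialHomeomorph ℂ ℂ} (he : ⇑e = cubeRootParam) (he0 : (0 : ℂ) ∈ e.source)
    {η : ℝ} (hη : 0 < η)
    (hball : ∀ s ∈ Metric.ball (0 : ℂ) η, s ∈ e.target ∧ ‖e.symm s‖ < 1 / 2) :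
    ∃ δ > 0, ∀ w ∈ Metric.ball (0 : ℂ) δ ∩ Complex.slitPlane,
      g (uc * (1 - w)) = Ahat (1 - e.symm (w ^ ((1 : ℂ) / 3))) := by
  have hc := uc_pos
  set δ : ℝ := min (η ^ 3) (ε / uc) with hδ_def
  have hδ : 0 < δ := by positivity
  set V : Set ℂ := Metric.ball (0 : ℂ) δ ∩ Complex.slitPlane with hV
  have hroot : ∀ w ∈ V, w ^ ((1 : ℂ) / 3) ∈ Metric.ball (0 : ℂ) η := by
    intro w hw
    rw [mem_ball_zero_iff]
    refine lt_of_pow_lt_pow_left₀ 3 hη.le ?_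
    rw [← norm_pow, cpow_one_third_pow_three]
    exact (mem_ball_zero_iff.mp hw.1).trans_le (min_le_left _ _)
  set φ : ℂ → ℂ := fun w => 1 - e.symm (w ^ ((1 : ℂ) / 3)) with hφ
  have huφ : ∀ w ∈ V, uhat (φ w) = uc * (1 - w) := by
    intro w hw
    rw [hφ, uhat_one_sub, ← he, e.right_inv (hball _ (hroot w hw)).1, cpow_one_third_pow_three]
  have hφ_cont : ContinuousOn φ V := by
    have hpow : ContinuousOn (fun w : ℂ => w ^ ((1 : ℂ) / 3)) V := fun w hw =>
      (continuousAt_cpow_const hw.2).continuousWithinAt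
    exact continuousOn_const.sub
      (e.continuousOn_symm.comp hpow fun w hw => (hball _ (hroot w hw)).1)
  obtain ⟨x, hx0, hx1, hxV⟩ : ∃ x : ℝ, 0 < x ∧ x < 1 ∧
      (x : ℂ) ∈ e.source ∧ cubeRootParam x ^ 3 ∈ Metric.ball (0 : ℂ) δ := by
    have hsource : ∀ᶠ h : ℂ in 𝓝 0, h ∈ e.source := e.open_source.mem_nhds he0
    have hsmall : ∀ᶠ h : ℂ in 𝓝 0, cubeRootParam h ^ 3 ∈ Metric.ball (0 : ℂ) δ := by
      refine (analyticAt_cubeRootParam.continuousAt.pow 3).eventually_mem ?_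
      exact Metric.isOpen_ball.mem_nhds (by simpa [cubeRootParam] using hδ)
    have hreal : Tendsto (fun x : ℝ => (x : ℂ)) (𝓝[>] 0) (𝓝 0) :=
      (Complex.continuous_ofReal.tendsto' 0 0 (by simp)).mono_left nhdsWithin_le_nhds
    obtain ⟨x, hx, hxpos, hxlt⟩ := ((hreal.eventually (hsource.and hsmall)).and
      (Ioo_mem_nhdsGT one_pos)).exists
    exact ⟨x, hxpos, hxlt, hx⟩
  obtain ⟨y, hy, hxy⟩ := exists_cubeRootParam_ofReal hx0
  have hyV : (y : ℂ) ^ 3 ∈ V := by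
    refine ⟨hxy ▸ hxV.2, ?_⟩
    rw [← Complex.ofReal_pow, Complex.ofReal_mem_slitPlane]
    positivity
  have hφy : φ ((y : ℂ) ^ 3) = ((1 - x : ℝ) : ℂ) := by
    rw [hφ]
    simp only
    rw [ofReal_pow_three_cpow_one_third hy, ← hxy, ← he, e.left_inv hxV.1]
    push_cast
    rfl
  set U : Set ℂ := Complex.ofReal '' Set.Ico 0 1 ∪ φ '' V with hU
  have hU_conn : IsPreconnected U :=
    IsPreconnected.union ((1 - x : ℝ) : ℂ)
      (Set.mem_image_of_mem _ ⟨by linarith, by linarith⟩)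
      ⟨_, hyV, hφy⟩
      (isPreconnected_Ico.image _ Complex.continuous_ofReal.continuousOn)
      ((isPreconnected_ball_inter_slitPlane hδ).image _ hφ_cont)
  have hU_slit : ∀ H ∈ U, uhat H ∈ slitDisk uc ε := by
    rintro H (⟨t, ht, rfl⟩ | ⟨w, hw, rfl⟩)
    · exact uhat_ofReal_mem_slitDisk hε ht.1 ht.2
    · rw [huφ w hw]
      refine mul_one_sub_mem_slitDisk hw.2 ?_
      have h1 : ‖1 - w‖ ≤ 1 + ‖w‖ := by simpa using norm_sub_le (1 : ℂ) w
      have h2 : ‖w‖ < ε / uc := (mem_ball_zero_iff.mp hw.1).trans_le (min_le_right _ _)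
      rw [lt_div_iff₀ hc] at h2
      nlinarith
  have hU_ne : ∀ H ∈ U, 3 - 3 * H + H ^ 2 ≠ 0 := by
    rintro H (⟨t, -, rfl⟩ | ⟨w, hw, rfl⟩)
    · exact three_sub_add_sq_ne_zero_of_real t
    · exact three_sub_add_sq_ne_zero_of_norm_lt (hball _ (hroot w hw)).2
  have hEq : Set.EqOn (fun H => g (uhat H)) Ahat U := by
    refine AnalyticOnNhd.eqOn_of_preconnected_of_eventuallyEq (𝕜 := ℂ) (z₀ := 0)
      (fun H hH => (hg_an _ (hU_slit H hH)).fun_comp (analyticAt_uhat H))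
      (fun H hH => analyticAt_Ahat (hU_ne H hH)) hU_conn
      (Or.inl ⟨0, by simp, by simp⟩) ?_
    filter_upwards [Metric.ball_mem_nhds (0 : ℂ) hρ] with H hH
    exact hg H (mem_ball_zero_iff.mp hH)
  refine ⟨δ, hδ, fun w hw => ?_⟩
  rw [← huφ w hw]
  exact hEq (Or.inr ⟨w, hw, rfl⟩)

/-- the analytic continuation `g` of `A = Â ∘ û⁻¹` to a slit disk at `u_c`
satisfies `g(u) = Â(1) + b (1 − u/u_c)^{1/3} + O((1 − u/u_c)^{2/3})` as `u → u_c` within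
the slit disk, where `b = −(27/20)(3/2)^{2/3}` (principal branch powers). -/
theorem statement8
    (ρ : ℝ) (hρ : 0 < ρ)
    (g : ℂ → ℂ) (ε : ℝ) (hε : 0 < ε)
    (hg_an : ∀ w ∈ slitDisk uc ε, AnalyticAt ℂ g w)
    -- `g` is the analytic continuation of `A = Â ∘ û⁻¹`
    (hg : ∀ H : ℂ, ‖H‖ < ρ → g (uhat H) = Ahat H) :
    Asymptotics.IsBigO (nhdsWithin ((uc : ℝ) : ℂ) (slitDisk uc ε))
      (fun u : ℂ => g u - (Ahat 1 + (bconst : ℂ) * (1 - u / ((uc : ℝ) : ℂ)) ^ ((1 : ℂ)/3)))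
      (fun u : ℂ => ‖1 - u / ((uc : ℝ) : ℂ)‖ ^ ((2:ℝ)/3)) := by
  have hc' : (uc : ℂ) ≠ 0 := by exact_mod_cast uc_pos.ne'
  obtain ⟨e, he, he0⟩ := exists_openPartialHomeomorph_cubeRootParam
  have hzero : e 0 = 0 := by simp [he, cubeRootParam]
  have h0t : (0 : ℂ) ∈ e.target := hzero ▸ e.map_source he0
  have hsymm0 : e.symm 0 = 0 := by simpa [hzero] using e.left_inv he0
  have hsymm : Tendsto e.symm (𝓝 0) (𝓝 0) := by
    simpa [ContinuousAt, hsymm0] using e.continuousAt_symm h0t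
  obtain ⟨η, hη, hball⟩ := Metric.eventually_nhds_iff_ball.mp
    ((e.open_target.eventually_mem h0t).and
      (hsymm.norm.eventually_lt_const (show ‖(0 : ℂ)‖ < 1 / 2 by simp)))
  obtain ⟨δ, hδ, hgA⟩ := continuation_eq_Ahat_of_local_inverse hρ hε hg_an hg he he0 hη hball
  have hw : Tendsto (fun u : ℂ => 1 - u / (uc : ℂ)) (𝓝[slitDisk uc ε] (uc : ℂ)) (𝓝 0) := by
    have hcont : Continuous fun u : ℂ => 1 - u / (uc : ℂ) := by fun_prop
    exact (hcont.tendsto' _ _ (by simp [hc'])).mono_left nhdsWithin_le_nhds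
  have hs : Tendsto (fun u : ℂ => (1 - u / (uc : ℂ)) ^ ((1 : ℂ) / 3))
      (𝓝[slitDisk uc ε] (uc : ℂ)) (𝓝 0) := by
    rw [tendsto_zero_iff_norm_tendsto_zero]
    simp only [norm_cpow_one_third]
    simpa using hw.norm.rpow_const (p := (1 : ℝ) / 3) (Or.inr (by norm_num))
  refine (isBigO_Ahat_one_sub.comp_tendsto (hsymm.comp hs)).norm_right.congr' ?_ ?_
  · filter_upwards [self_mem_nhdsWithin, hw.eventually_mem (Metric.ball_mem_nhds 0 hδ),
      hs.eventually_mem (Metric.ball_mem_nhds 0 hη)] with u hu hwu hsu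
    have := hgA _ ⟨hwu, one_sub_div_mem_slitPlane hu⟩
    rw [sub_sub_cancel, mul_div_cancel₀ _ hc'] at this
    simp only [Function.comp_apply]
    rw [this, ← he, e.right_inv (hball _ hsu).1]
  · filter_upwards [hs.eventually_mem (Metric.ball_mem_nhds 0 hη)] with u hsu
    simp only [Function.comp_apply]
    rw [← he, e.right_inv (hball _ hsu).1, norm_pow, norm_cpow_one_third, ← Real.rpow_natCast,
      ← Real.rpow_mul (norm_nonneg _)]
    norm_num
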